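/- arXiv:1807.05662 — 2 statements merged into one kernel-verified Lean document; each statement's English description precedes it below -/
import Mathlib

section
/- If M and H are k×k filter matrices with M ⪰ H, then there exists a function g such that φ_H(x) = g(φ_M(x)) for every realization x of the chain; that is, the chain filtered by H is a function of the chain filtered by M. -/
open scoped BigOperators Classical

namespace FilteredMarkov

variable {k : ℕ}

/-- Probability of a complete realization `x` of the chain (of length `n+1`,
i.e. with `n` transitions), given the known initial state `s`, under the
transition probabilities `p`. -/
noncomputable def chainProb {n : ℕ} (p : Fin k → Fin k → ℝ) (s : Fin k)
    (x : Fin (n + 1) → Fin k) : ℝ :=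
  (if x 0 = s then (1 : ℝ) else 0) * ∏ i : Fin n, p (x i.castSucc) (x i.succ)

/-- Extension of a finite realization to all of `ℕ` (values beyond the range
are junk, obtained by reducing the index mod `n+1`). -/
def extChain {n : ℕ} (x : Fin (n + 1) → Fin k) : ℕ → Fin k :=
  fun t => x ⟨t % (n + 1), Nat.mod_lt _ (Nat.succ_pos n)⟩

/-- The filtered chain `φ_F(x)`: the state at position `t` is retained if the
transition into it (`f_{x_{t-1}, x_t} = 1`) or out of it (`f_{x_t, x_{t+1}} = 1`)
is recorded by the filter matrix `F`; otherwise it is replaced by a blank (`none`). -/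
def phi {n : ℕ} (F : Fin k → Fin k → Bool) (x : Fin (n + 1) → Fin k) :
    Fin (n + 1) → Option (Fin k) :=
  fun t =>
    if (0 < (t : ℕ) ∧ F (extChain x ((t : ℕ) - 1)) (x t) = true) ∨
        ((t : ℕ) + 1 < n + 1 ∧ F (x t) (extChain x ((t : ℕ) + 1)) = true)
    then some (x t) else none

/-- The probability distribution of the filtered chain `φ_F(X)` (as a probability
mass function on possible filtered sequences), for a chain of length `n+1` with
known initial state `s` and transition probabilities `p`. -/
noncomputable def obsDist (n : ℕ) (p : Fin k → Fin k → ℝ) (s : Fin k)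
    (F : Fin k → Fin k → Bool) : (Fin (n + 1) → Option (Fin k)) → ℝ :=
  fun y => ∑ x : Fin (n + 1) → Fin k, if phi F x = y then chainProb p s x else 0

/-- The parameter space: all the transition probabilities are strictly between
0 and 1 and each row of the transition probability matrix sums to 1. -/
def IsParam (p : Fin k → Fin k → ℝ) : Prop :=
  (∀ i j, 0 < p i j ∧ p i j < 1) ∧ ∀ i, ∑ j, p i j = 1

/-- A filter matrix `F` is identifiable (`F ∈ 𝓘`) if any two distinct values of the
parameter `θ` (the transition probabilities) induce distinct probability
distributions of the filtered chain `φ_F(X)` (for a sufficiently long chain). -/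
def Identifiable (k : ℕ) (F : Fin k → Fin k → Bool) : Prop :=
  ∀ p q : Fin k → Fin k → ℝ, IsParam p → IsParam q → p ≠ q →
    ∃ (n : ℕ) (s : Fin k), obsDist n p s F ≠ obsDist n q s F

theorem aux_val {k n : ℕ} (F : Fin k → Fin k → Bool) (x : Fin (n + 1) → Fin k)
    (t : Fin (n + 1)) (b : Fin k) (h : phi F x t = some b) : x t = b := by
  unfold phi at h
  split_ifs at h
  exact Option.some.inj h

theorem aux_ext {k n : ℕ} (x : Fin (n + 1) → Fin k) (m : ℕ) (hm : m < n + 1) :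
    extChain x m = x ⟨m, hm⟩ := by
  unfold extChain
  congr 1
  exact Fin.ext (Nat.mod_eq_of_lt hm)

theorem aux_pair {k n : ℕ} (F : Fin k → Fin k → Bool) (x : Fin (n + 1) → Fin k)
    (m : ℕ) (hm : m + 1 < n + 1)
    (h : F (x ⟨m, by omega⟩) (x ⟨m + 1, hm⟩) = true) :
    phi F x ⟨m, by omega⟩ = some (x ⟨m, by omega⟩) ∧
    phi F x ⟨m + 1, hm⟩ = some (x ⟨m + 1, hm⟩) := by
  constructor
  · unfold phi
    rw [if_pos]
    right
    refine ⟨hm, ?_⟩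
    rw [aux_ext x _ hm]
    exact h
  · unfold phi
    rw [if_pos]
    left
    refine ⟨Nat.succ_pos m, ?_⟩
    simp only [Nat.add_sub_cancel]
    rw [aux_ext x m (by omega)]
    exact h

theorem aux_transfer {k n : ℕ} (M H : Fin k → Fin k → Bool)
    (hMH : ∀ i j, H i j = true → M i j = true) (x x' : Fin (n + 1) → Fin k)
    (he : phi M x = phi M x') (t : Fin (n + 1)) (b : Fin k)
    (h : phi H x t = some b) : phi H x' t = some b := by
  have key : ∀ (m : ℕ) (hm : m + 1 < n + 1),
      H (x ⟨m, by omega⟩) (x ⟨m + 1, hm⟩) = true →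
      phi H x' ⟨m, by omega⟩ = some (x ⟨m, by omega⟩) ∧
      phi H x' ⟨m + 1, hm⟩ = some (x ⟨m + 1, hm⟩) := by
    intro m hm hH
    obtain ⟨h1, h2⟩ := aux_pair M x m hm (hMH _ _ hH)
    rw [he] at h1 h2
    have e1 := aux_val _ _ _ _ h1
    have e2 := aux_val _ _ _ _ h2
    rw [← e1, ← e2] at hH ⊢
    exact aux_pair H x' m hm hH
  have hb := aux_val _ _ _ _ h
  subst hb
  obtain ⟨t, ht⟩ := t
  unfold phi at h
  split_ifs at h with hc
  rcases hc with ⟨h0, h1⟩ | ⟨h0, h1⟩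
  · obtain ⟨m, rfl⟩ : ∃ m, t = m + 1 := ⟨t - 1, by simp only at h0; omega⟩
    simp only [Nat.add_sub_cancel] at h1
    rw [aux_ext x m (by omega)] at h1
    exact (key m ht h1).2
  · rw [aux_ext x _ h0] at h1
    exact (key t h0 h1).1

/-- If `M` and `H` are `k × k` filter matrices with `M ⪰ H` (i.e. `h_ij = 1` implies
`m_ij = 1` for all `i, j`), then there exists a function `g` such that
`φ_H(x) = g(φ_M(x))` for every realization `x` of the chain; that is, the chain
filtered by `H` is a function of the chain filtered by `M`. -/
theorem statement_1 {k : ℕ} (M H : Fin k → Fin k → Bool)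
    (hMH : ∀ i j, H i j = true → M i j = true) (n : ℕ) :
    ∃ g : (Fin (n + 1) → Option (Fin k)) → (Fin (n + 1) → Option (Fin k)),
      ∀ x : Fin (n + 1) → Fin k, phi H x = g (phi M x) := by
  refine ⟨fun y => if h : ∃ x, phi M x = y then phi H h.choose else y, fun x => ?_⟩
  have hex : ∃ x', phi M x' = phi M x := ⟨x, rfl⟩
  simp only [dif_pos hex]
  have he := hex.choose_spec
  funext t
  apply Option.ext
  intro b
  exact ⟨aux_transfer M H hMH _ _ he.symm t b, aux_transfer M H hMH _ _ he t b⟩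

end FilteredMarkov
end

section
/- Let H and M be k×k filter matrices. (a) If H is identifiable and M ⪰ H, then M is identifiable. (b) If H is not identifiable and M ⪯ H, then M is not identifiable. -/
open scoped BigOperators Classical

namespace FilteredMarkov

variable {k : ℕ}

lemma extChain_val {n : ℕ} (x : Fin (n + 1) → Fin k) (t : Fin (n + 1)) :
    extChain x (t : ℕ) = x t := by
  unfold extChain
  congr 1
  ext
  exact Nat.mod_eq_of_lt t.2

lemma phi_some {n : ℕ} (F : Fin k → Fin k → Bool) (x x' : Fin (n + 1) → Fin k)
    (h : phi F x = phi F x') (t : Fin (n + 1))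
    (ht : (0 < (t : ℕ) ∧ F (extChain x ((t : ℕ) - 1)) (x t) = true) ∨
        ((t : ℕ) + 1 < n + 1 ∧ F (x t) (extChain x ((t : ℕ) + 1)) = true)) :
    x t = x' t := by
  have h1 := congrFun h t
  unfold phi at h1
  rw [if_pos ht] at h1
  split_ifs at h1 with h2
  exact Option.some.inj h1

lemma edge_eq {n : ℕ} (F : Fin k → Fin k → Bool) (x x' : Fin (n + 1) → Fin k)
    (h : phi F x = phi F x') (i : ℕ) (hi : i + 1 < n + 1)
    (hF : F (extChain x i) (extChain x (i + 1)) = true) :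
    extChain x i = extChain x' i ∧ extChain x (i + 1) = extChain x' (i + 1) := by
  have a : ∀ z : Fin (n + 1) → Fin k, extChain z i = z ⟨i, by omega⟩ :=
    fun z => extChain_val z ⟨i, by omega⟩
  have b : ∀ z : Fin (n + 1) → Fin k, extChain z (i + 1) = z ⟨i + 1, hi⟩ :=
    fun z => extChain_val z ⟨i + 1, hi⟩
  constructor
  · rw [a, a]
    apply phi_some F x x' h
    right
    exact ⟨hi, by rw [← a x]; exact hF⟩
  · rw [b, b]
    apply phi_some F x x' h
    left
    exact ⟨Nat.succ_pos _, by rw [← b x]; exact hF⟩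

lemma phi_aux {n : ℕ} (H M : Fin k → Fin k → Bool)
    (hHM : ∀ i j, H i j = true → M i j = true) (x x' : Fin (n + 1) → Fin k)
    (h : phi M x = phi M x') (t : Fin (n + 1))
    (ht : (0 < (t : ℕ) ∧ H (extChain x ((t : ℕ) - 1)) (x t) = true) ∨
        ((t : ℕ) + 1 < n + 1 ∧ H (x t) (extChain x ((t : ℕ) + 1)) = true)) :
    x t = x' t ∧ ((0 < (t : ℕ) ∧ H (extChain x' ((t : ℕ) - 1)) (x' t) = true) ∨
        ((t : ℕ) + 1 < n + 1 ∧ H (x' t) (extChain x' ((t : ℕ) + 1)) = true)) := by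
  rw [← extChain_val x t] at ht ⊢
  rw [← extChain_val x' t]
  rcases ht with ⟨h0, h1⟩ | ⟨h0, h1⟩
  · have e : (t : ℕ) - 1 + 1 = t := by omega
    have := edge_eq M x x' h ((t : ℕ) - 1) (by omega) (by rw [e]; exact hHM _ _ h1)
    rw [e] at this
    refine ⟨this.2, Or.inl ⟨h0, ?_⟩⟩
    rw [← this.1, ← this.2]; exact h1
  · have := edge_eq M x x' h t h0 (hHM _ _ h1)
    refine ⟨this.1, Or.inr ⟨h0, ?_⟩⟩
    rw [← this.1, ← this.2]; exact h1

lemma phi_factor {n : ℕ} (H M : Fin k → Fin k → Bool)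
    (hHM : ∀ i j, H i j = true → M i j = true) (x x' : Fin (n + 1) → Fin k)
    (h : phi M x = phi M x') : phi H x = phi H x' := by
  funext t
  have h1 := phi_aux H M hHM x x' h t
  have h2 := phi_aux H M hHM x' x h.symm t
  unfold phi
  split_ifs with a b b
  · rw [(h1 a).1]
  · exact absurd (h1 a).2 b
  · exact absurd (h2 b).2 a
  · rfl

lemma obs_eq {n : ℕ} (H M : Fin k → Fin k → Bool)
    (hHM : ∀ i j, H i j = true → M i j = true) (p : Fin k → Fin k → ℝ) (s : Fin k) :
    obsDist n p s H = fun y => ∑ z : Fin (n + 1) → Option (Fin k),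
      if (∃ x, phi (n := n) M x = z ∧ phi H x = y) then obsDist n p s M z else 0 := by
  funext y
  simp only [obsDist, ← Finset.sum_filter]
  rw [Finset.sum_filter, Finset.sum_filter]
  have : ∀ z : Fin (n + 1) → Option (Fin k),
      (if (∃ x, phi (n := n) M x = z ∧ phi H x = y) then
        ∑ x : Fin (n + 1) → Fin k with phi M x = z, chainProb p s x else 0)
      = ∑ x : Fin (n + 1) → Fin k, if phi M x = z then
          (if phi H x = y then chainProb p s x else 0) else 0 := by
    intro z
    split_ifs with hz
    · obtain ⟨w, hw, hy⟩ := hz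
      rw [Finset.sum_filter]
      refine Finset.sum_congr rfl fun x _ => ?_
      by_cases hx : phi M x = z
      · have := phi_factor H M hHM x w (hx.trans hw.symm)
        rw [if_pos hx, if_pos hx, if_pos (this.trans hy)]
      · rw [if_neg hx, if_neg hx]
    · symm
      refine Finset.sum_eq_zero fun x _ => ?_
      by_cases hx : phi M x = z
      · rw [if_pos hx, if_neg fun hy => hz ⟨x, hx, hy⟩]
      · rw [if_neg hx]
  rw [Finset.sum_congr rfl fun z _ => this z, Finset.sum_comm]
  refine Finset.sum_congr rfl fun x _ => ?_
  simp

lemma ident_mono (H M : Fin k → Fin k → Bool)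
    (hHM : ∀ i j, H i j = true → M i j = true) (h : Identifiable k H) :
    Identifiable k M := by
  intro p q hp hq hpq
  obtain ⟨n, s, hne⟩ := h p q hp hq hpq
  refine ⟨n, s, fun he => hne ?_⟩
  rw [obs_eq H M hHM, obs_eq H M hHM, he]

/-- Let `H` and `M` be `k × k` filter matrices.
(a) If `H` is identifiable and `M ⪰ H` (`h_ij = 1 → m_ij = 1`), then `M` is
identifiable.
(b) If `H` is not identifiable and `M ⪯ H` (`h_ij = 0 → m_ij = 0`), then `M` is
not identifiable. -/
theorem statement_2 {k : ℕ} (H M : Fin k → Fin k → Bool) :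
    ((Identifiable k H ∧ ∀ i j, H i j = true → M i j = true) → Identifiable k M) ∧
      ((¬ Identifiable k H ∧ ∀ i j, H i j = false → M i j = false) →
        ¬ Identifiable k M) := by
  refine ⟨fun h => ident_mono H M h.2 h.1, fun h hM => h.1 (ident_mono M H ?_ hM)⟩
  intro i j hij
  by_contra hc
  have := h.2 i j (by simpa using hc)
  simp [this] at hij

end FilteredMarkov
end
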